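/- Let z, y ∈ k^× with y^3 = z. Then the H_k-module M_3(z,y) has exactly one H_k-submodule D other than 0 and M_3(z,y); D is one-dimensional and on D the element T acts by the scalar y and S_1 acts by 0 (so D is isomorphic to the character M_1(0,y)); and the quotient M_3(z,y)/D is isomorphic to M_2(y). -/

import Mathlib

/-- The defining relations of the affine Hecke algebra of type `A_2` (for `Gl_3`),
on the free algebra on four generators `T = X 0`, `T⁻¹ = X 1`, `S_1 = X 2`, `S_2 = X 3`. -/
inductive HeckeRel (R : Type) [CommRing R] (q : R) :
    FreeAlgebra R (Fin 4) → FreeAlgebra R (Fin 4) → Prop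
  | TTinv : HeckeRel R q (FreeAlgebra.ι R 0 * FreeAlgebra.ι R 1) 1
  | TinvT : HeckeRel R q (FreeAlgebra.ι R 1 * FreeAlgebra.ι R 0) 1
  | quad : HeckeRel R q
      ((FreeAlgebra.ι R 2 + 1) * (FreeAlgebra.ι R 2 - algebraMap R (FreeAlgebra R (Fin 4)) q)) 0
  | T3S1 : HeckeRel R q (FreeAlgebra.ι R 0 ^ 3 * FreeAlgebra.ι R 2)
      (FreeAlgebra.ι R 2 * FreeAlgebra.ι R 0 ^ 3)
  | braid : HeckeRel R q (FreeAlgebra.ι R 2 * FreeAlgebra.ι R 3 * FreeAlgebra.ι R 2)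
      (FreeAlgebra.ι R 3 * FreeAlgebra.ι R 2 * FreeAlgebra.ι R 3)
  | TS2 : HeckeRel R q (FreeAlgebra.ι R 0 * FreeAlgebra.ι R 3)
      (FreeAlgebra.ι R 2 * FreeAlgebra.ι R 0)

/-- The affine Hecke algebra `H_R` with parameter `q ∈ R`. -/
abbrev HeckeAlg (R : Type) [CommRing R] (q : R) := RingQuot (HeckeRel R q)

namespace HeckeAlg

variable (R : Type) [CommRing R] (q : R)

noncomputable def gen (i : Fin 4) : HeckeAlg R q :=
  RingQuot.mkAlgHom R (HeckeRel R q) (FreeAlgebra.ι R i)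

noncomputable def T : HeckeAlg R q := gen R q 0
noncomputable def Tinv : HeckeAlg R q := gen R q 1
noncomputable def S1 : HeckeAlg R q := gen R q 2
noncomputable def S2 : HeckeAlg R q := gen R q 3

theorem T_mul_Tinv : T R q * Tinv R q = 1 := by
  simpa [T, Tinv, gen, map_mul, map_one] using
    RingQuot.mkAlgHom_rel R (HeckeRel.TTinv (R := R) (q := q))

theorem Tinv_mul_T : Tinv R q * T R q = 1 := by
  simpa [T, Tinv, gen, map_mul, map_one] using
    RingQuot.mkAlgHom_rel R (HeckeRel.TinvT (R := R) (q := q))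

theorem quad_rel : (S1 R q + 1) * (S1 R q - algebraMap R (HeckeAlg R q) q) = 0 := by
  simpa [S1, gen, map_mul, map_add, map_sub, map_one, map_zero, AlgHom.commutes] using
    RingQuot.mkAlgHom_rel R (HeckeRel.quad (R := R) (q := q))

theorem T3_mul_S1 : T R q ^ 3 * S1 R q = S1 R q * T R q ^ 3 := by
  simpa [T, S1, gen, map_mul, map_pow] using
    RingQuot.mkAlgHom_rel R (HeckeRel.T3S1 (R := R) (q := q))

theorem braid_rel : S1 R q * S2 R q * S1 R q = S2 R q * S1 R q * S2 R q := by
  simpa [S1, S2, gen, map_mul] using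
    RingQuot.mkAlgHom_rel R (HeckeRel.braid (R := R) (q := q))

theorem T_mul_S2 : T R q * S2 R q = S1 R q * T R q := by
  simpa [T, S1, S2, gen, map_mul] using
    RingQuot.mkAlgHom_rel R (HeckeRel.TS2 (R := R) (q := q))

/-- The canonical (base change) ring homomorphism `H_R → H_S` induced by a ring
homomorphism `R → S` sending the parameter `q` to the parameter `q'`. -/
noncomputable def map {R S : Type} [CommRing R] [CommRing S] (f : R →+* S) (q : R) (q' : S)
    (h : f q = q') : HeckeAlg R q →+* HeckeAlg S q' := by
  subst h
  letI : Algebra R (HeckeAlg S (f q)) :=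
    RingHom.toAlgebra' ((algebraMap S (HeckeAlg S (f q))).comp f)
      (fun c x => by simpa using Algebra.commutes (f c) x)
  refine RingQuot.lift
    ⟨((FreeAlgebra.lift R fun i => gen S (f q) i : _ →ₐ[R] HeckeAlg S (f q)) :
        FreeAlgebra R (Fin 4) →+* HeckeAlg S (f q)), ?_⟩
  have key : ∀ i : Fin 4,
      (FreeAlgebra.lift R fun j => gen S (f q) j) (FreeAlgebra.ι R i) = gen S (f q) i :=
    fun i => FreeAlgebra.lift_ι_apply _ _
  have keyq : (FreeAlgebra.lift R fun j => gen S (f q) j)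
      (algebraMap R (FreeAlgebra R (Fin 4)) q) = algebraMap S (HeckeAlg S (f q)) (f q) := by
    rw [AlgHom.commutes]
    rfl
  intro a b hab
  cases hab with
  | TTinv => simpa [key, T, Tinv] using T_mul_Tinv S (f q)
  | TinvT => simpa [key, T, Tinv] using Tinv_mul_T S (f q)
  | quad => simpa [key, keyq, S1] using quad_rel S (f q)
  | T3S1 => simpa [key, T, S1] using T3_mul_S1 S (f q)
  | braid => simpa [key, S1, S2] using braid_rel S (f q)
  | TS2 => simpa [key, T, S1, S2] using T_mul_S2 S (f q)

/-- `S_1⁻¹ = q⁻¹ (S_1 - q + 1)`, where `qi` is an inverse of `q` in `R`. -/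
noncomputable def S1i (qi : R) : HeckeAlg R q :=
  algebraMap R (HeckeAlg R q) qi * (S1 R q - algebraMap R (HeckeAlg R q) q + 1)

/-- `S_2⁻¹ = q⁻¹ (S_2 - q + 1)`, where `qi` is an inverse of `q` in `R`. -/
noncomputable def S2i (qi : R) : HeckeAlg R q :=
  algebraMap R (HeckeAlg R q) qi * (S2 R q - algebraMap R (HeckeAlg R q) q + 1)

/-- The Bernstein elements `Y_1 = q S_1⁻¹ S_2⁻¹ T`, `Y_2 = S_2⁻¹ T S_1`,
`Y_3 = q⁻¹ T S_1 S_2`, where `qi` is an inverse of `q` in `R`. -/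
noncomputable def Y (qi : R) : Fin 3 → HeckeAlg R q :=
  ![algebraMap R (HeckeAlg R q) q * S1i R q qi * S2i R q qi * T R q,
    S2i R q qi * T R q * S1 R q,
    algebraMap R (HeckeAlg R q) qi * T R q * S1 R q * S2 R q]

end HeckeAlg

noncomputable section

variable (p : ℕ) [Fact p.Prime] (k : Type) [Field k] [IsAlgClosed k] [CharP k p]

/-- `H_k = H ⊗_{ℤ[q]} k` with `q ↦ 0`. -/
abbrev Hk : Type := HeckeAlg k 0

/-- The action of `T` on a `1`-dimensional space: multiplication by `c`. -/
def Tmat1 (c : k) : Module.End k (Fin 1 → k) := Matrix.mulVecLin !![c]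

/-- The action of `T` on the `2`-dimensional space with basis `w, Tw` where
`T(Tw) = -y²w - yTw`. -/
def Tmat2 (y : k) : Module.End k (Fin 2 → k) := Matrix.mulVecLin !![0, -y^2; 1, -y]

/-- The action of `T` on the `3`-dimensional space with basis `v, Tv, T²v` where
`T(T²v) = zv`. -/
def Tmat3 (z : k) : Module.End k (Fin 3 → k) := Matrix.mulVecLin !![0, 0, z; 1, 0, 0; 0, 1, 0]

/-- The action of `T` on the `6`-dimensional space with basis `v, Tv, T²v, w, Tw, T²w`
where `T(T²v) = zv`, `T(T²w) = zw`. -/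
def Tmat6 (z : k) : Module.End k (Fin 6 → k) := Matrix.mulVecLin
  !![0, 0, z, 0, 0, 0;
     1, 0, 0, 0, 0, 0;
     0, 1, 0, 0, 0, 0;
     0, 0, 0, 0, 0, z;
     0, 0, 0, 1, 0, 0;
     0, 0, 0, 0, 1, 0]

/-- The action of `S_1` on `L_6(z,y)`: `S_1v = 0`, `S_1(Tv) = T²w`, `S_1(T²v) = -T²v`,
`S_1w = -w`, `S_1(Tw) = (y/z)T²v`, `S_1(T²w) = -T²w`. -/
def SL6 (z y : k) : Module.End k (Fin 6 → k) := Matrix.mulVecLin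
  !![0, 0, 0,  0,  0,     0;
     0, 0, 0,  0,  0,     0;
     0, 0, -1, 0,  y / z, 0;
     0, 0, 0,  -1, 0,     0;
     0, 0, 0,  0,  0,     0;
     0, 1, 0,  0,  0,     -1]

/-- The action of `S_1` on `L̃_6(z,y)`: as on `L_6(z,y)` except `S_1v = w`, `S_1(Tv) = 0`. -/
def SLt6 (z y : k) : Module.End k (Fin 6 → k) := Matrix.mulVecLin
  !![0, 0, 0,  0,  0,     0;
     0, 0, 0,  0,  0,     0;
     0, 0, -1, 0,  y / z, 0;
     1, 0, 0,  -1, 0,     0;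
     0, 0, 0,  0,  0,     0;
     0, 0, 0,  0,  0,     -1]

/-- The action of `S_1` on `K_6(z,y,y')`: `S_1v = w`, `S_1(Tv) = (y/y')T²w`,
`S_1(T²v) = -T²v`, `S_1w = -w`, `S_1(Tw) = (y'/z)T²v`, `S_1(T²w) = -T²w`. -/
def SK6 (z y y' : k) : Module.End k (Fin 6 → k) := Matrix.mulVecLin
  !![0, 0,      0,  0,  0,      0;
     0, 0,      0,  0,  0,      0;
     0, 0,      -1, 0,  y' / z, 0;
     1, 0,      0,  -1, 0,      0;
     0, 0,      0,  0,  0,      0;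
     0, y / y', 0,  0,  0,      -1]

/-- The action of `S_1` on `M_3(z,y)`: `S_1v = 0`, `S_1(Tv) = y⁻¹T²v`, `S_1(T²v) = -T²v`. -/
def SM3 (y : k) : Module.End k (Fin 3 → k) := Matrix.mulVecLin
  !![0, 0, 0; 0, 0, 0; 0, y⁻¹, -1]

/-- The action of `S_1` on `M̃_3(z,y)`: `S_1v = -v`, `S_1(Tv) = -y⁻¹T²v`, `S_1(T²v) = -T²v`. -/
def SMt3 (y : k) : Module.End k (Fin 3 → k) := Matrix.mulVecLin
  !![-1, 0, 0; 0, 0, 0; 0, -y⁻¹, -1]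

/-- The action of `S_1` on `N_3(z,y)`: `S_1v = -v`, `S_1(Tv) = 0`, `S_1(T²v) = -yTv - T²v`. -/
def SN3 (y : k) : Module.End k (Fin 3 → k) := Matrix.mulVecLin
  !![-1, 0, 0; 0, 0, -y; 0, 0, -1]

/-- The action of `S_1` on `Ñ_3(z,y)`: `S_1v = 0`, `S_1(Tv) = 0`, `S_1(T²v) = yTv - T²v`. -/
def SNt3 (y : k) : Module.End k (Fin 3 → k) := Matrix.mulVecLin
  !![0, 0, 0; 0, 0, y; 0, 0, -1]

/-- The action of `S_1` on `P_3(z)`: `S_1v = 0`, `S_1(Tv) = 0`, `S_1(T²v) = -T²v`. -/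
def SP3 : Module.End k (Fin 3 → k) := Matrix.mulVecLin
  !![0, 0, 0; 0, 0, 0; 0, 0, -1]

/-- The action of `S_1` on `P̃_3(z)`: `S_1v = -v`, `S_1(Tv) = 0`, `S_1(T²v) = -T²v`. -/
def SPt3 : Module.End k (Fin 3 → k) := Matrix.mulVecLin
  !![-1, 0, 0; 0, 0, 0; 0, 0, -1]

/-- The action of `S_1` on `M_2(y)`: `S_1w = -w`, `S_1(Tw) = 0`. -/
def SM2 : Module.End k (Fin 2 → k) := Matrix.mulVecLin !![-1, 0; 0, 0]

/-- The action of `S_1` on `M̃_2(y)`: `S_1w = 0`, `S_1(Tw) = -Tw`. -/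
def SMt2 : Module.End k (Fin 2 → k) := Matrix.mulVecLin !![0, 0; 0, -1]

end

/-! The image of `S_1` on `M_3(z,y)` is the line through `T²v`, and `T²v` generates the whole module
under `T`. Hence `S_1`, and therefore also `S_1 T`, kills every proper submodule `D`. The common
kernel of `S_1` and `S_1 T` is the line through `u = y²v + yTv + T²v`; it is a submodule, because
`y³ = z` makes `u` an eigenvector of `T`. Rescaling the coefficients of `T²v` in `S_1x` and `S_1Tx`
gives the map onto `M_2(y)` whose kernel is this line. -/

theorem mem_invtSubmodule_of_mul_eq_one {R M : Type*} [CommRing R] [AddCommGroup M] [Module R M]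
    [IsArtinian R M] {f g : Module.End R M} (hgf : g * f = 1) {D : Submodule R M}
    (hD : D ∈ f.invtSubmodule) : D ∈ g.invtSubmodule := by
  have hleft : Function.LeftInverse g f := LinearMap.congr_fun hgf
  have hinj : Function.Injective (f.restrict hD) := fun a b hab =>
    Subtype.ext (hleft.injective (congrArg Subtype.val hab))
  intro x hx
  obtain ⟨x', hx'⟩ := IsArtinian.surjective_of_injective_endomorphism (f.restrict hD) hinj ⟨x, hx⟩
  obtain rfl : f x' = x := congrArg Subtype.val hx'
  simpa only [Submodule.mem_comap, hleft (x' : M)] using x'.2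

theorem mem_invtSubmodule_of_adjoin_eq_top {R A M : Type*} [CommRing R] [Ring A] [Algebra R A]
    [AddCommGroup M] [Module R M] (ρ : A →ₐ[R] Module.End R M) {s : Set A}
    (hs : Algebra.adjoin R s = ⊤) {D : Submodule R M} (hD : ∀ a ∈ s, D ∈ (ρ a).invtSubmodule)
    (a : A) : D ∈ (ρ a).invtSubmodule := by
  have ha : a ∈ Algebra.adjoin R s := hs ▸ Algebra.mem_top
  induction ha using Algebra.adjoin_induction with
  | mem b hb => exact hD b hb
  | algebraMap r =>
    intro x hx
    simpa using D.smul_mem r hx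
  | add b c _ _ hb hc =>
    intro x hx
    simpa using D.add_mem (hb hx) (hc hx)
  | mul b c _ _ hb hc =>
    intro x hx
    simpa using hb (hc hx)

namespace HeckeAlg

section Generators

variable (R : Type) [CommRing R] (q : R)

theorem S2_eq : S2 R q = Tinv R q * S1 R q * T R q := by
  rw [mul_assoc, ← T_mul_S2, ← mul_assoc, Tinv_mul_T, one_mul]

theorem adjoin_range_gen : Algebra.adjoin R (Set.range (gen R q)) = ⊤ := by
  have hgen : gen R q = RingQuot.mkAlgHom R (HeckeRel R q) ∘ FreeAlgebra.ι R := rfl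
  rw [hgen, Set.range_comp, ← AlgHom.map_adjoin, FreeAlgebra.adjoin_range_ι, Algebra.map_top,
    AlgHom.range_eq_top]
  exact RingQuot.mkAlgHom_surjective R (HeckeRel R q)

end Generators

section Lift

variable {R : Type} [CommRing R] {q : R} {A : Type*} [Ring A] [Algebra R A]

/-- The homomorphism out of the affine Hecke algebra with `T ↦ t` and `S_1 ↦ s`. The image of
`S_2` is forced to be `t⁻¹st`, so only the relations between `t` and `s` have to be supplied. -/
noncomputable def lift (t : Aˣ) (s : A) (hquad : (s + 1) * (s - algebraMap R A q) = 0)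
    (hcomm : Commute ((t : A) ^ 3) s)
    (hbraid : s * (↑t⁻¹ * s * t) * s = ↑t⁻¹ * s * t * s * (↑t⁻¹ * s * t)) :
    HeckeAlg R q →ₐ[R] A :=
  RingQuot.liftAlgHom R ⟨FreeAlgebra.lift R ![(t : A), ↑t⁻¹, s, ↑t⁻¹ * s * t], by
    intro a b hab
    cases hab with
    | TTinv => simp
    | TinvT => simp
    | quad => simpa using hquad
    | T3S1 => simpa using hcomm.eq
    | braid => simpa using hbraid
    | TS2 => simp [mul_assoc]⟩

variable (t : Aˣ) (s : A) (hquad : (s + 1) * (s - algebraMap R A q) = 0)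
  (hcomm : Commute ((t : A) ^ 3) s)
  (hbraid : s * (↑t⁻¹ * s * t) * s = ↑t⁻¹ * s * t * s * (↑t⁻¹ * s * t))

theorem lift_T : lift t s hquad hcomm hbraid (T R q) = t := by
  simp [lift, T, gen]

theorem lift_S1 : lift t s hquad hcomm hbraid (S1 R q) = s := by
  simp [lift, S1, gen]

end Lift

theorem forall_mem_invtSubmodule_iff {R : Type} [CommRing R] {q : R} {M : Type*} [AddCommGroup M]
    [Module R M] [IsArtinian R M] (ρ : HeckeAlg R q →ₐ[R] Module.End R M) {D : Submodule R M} :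
    (∀ a, D ∈ (ρ a).invtSubmodule) ↔
      D ∈ (ρ (T R q)).invtSubmodule ∧ D ∈ (ρ (S1 R q)).invtSubmodule := by
  refine ⟨fun hD => ⟨hD _, hD _⟩, fun ⟨hT, hS1⟩ a => ?_⟩
  have hinv : ρ (Tinv R q) * ρ (T R q) = 1 := by rw [← map_mul, Tinv_mul_T, map_one]
  have hTinv : D ∈ (ρ (Tinv R q)).invtSubmodule := mem_invtSubmodule_of_mul_eq_one hinv hT
  have hS2 : D ∈ (ρ (S2 R q)).invtSubmodule := by
    intro x hx
    simpa [S2_eq] using hTinv (hS1 (hT hx))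
  refine mem_invtSubmodule_of_adjoin_eq_top ρ (adjoin_range_gen R q) ?_ a
  rintro _ ⟨i, rfl⟩
  fin_cases i
  exacts [hT, hTinv, hS1, hS2]

end HeckeAlg

theorem braid_of_mul_mul_eq_zero {A : Type*} [MonoidWithZero A] {t : Aˣ} {s : A}
    (h : s * t * s = 0) :
    s * (↑t⁻¹ * s * t) * s = ↑t⁻¹ * s * t * s * (↑t⁻¹ * s * t) := by
  calc s * (↑t⁻¹ * s * t) * s = s * ↑t⁻¹ * (s * t * s) := by simp only [mul_assoc]
    _ = ↑t⁻¹ * (s * t * s) * (↑t⁻¹ * s * t) := by rw [h, mul_zero, mul_zero, zero_mul]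
    _ = ↑t⁻¹ * s * t * s * (↑t⁻¹ * s * t) := by simp only [mul_assoc]

section M3

variable {k : Type} [Field k] {z y : k}

theorem Tmat3_apply (z : k) (x : Fin 3 → k) : Tmat3 k z x = ![z * x 2, x 0, x 1] := by
  ext i; fin_cases i <;> simp [Tmat3, Matrix.mulVec, dotProduct, Fin.sum_univ_three]

theorem SM3_apply (y : k) (x : Fin 3 → k) : SM3 k y x = ![0, 0, y⁻¹ * x 1 - x 2] := by
  ext i; fin_cases i <;> simp [SM3, Matrix.mulVec, dotProduct, Fin.sum_univ_three, sub_eq_add_neg]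

theorem Tmat2_apply (y : k) (x : Fin 2 → k) : Tmat2 k y x = ![-y ^ 2 * x 1, x 0 - y * x 1] := by
  ext i; fin_cases i <;> simp [Tmat2, Matrix.mulVec, dotProduct, Fin.sum_univ_two, sub_eq_add_neg]

theorem SM2_apply (x : Fin 2 → k) : SM2 k x = ![-x 0, 0] := by
  ext i; fin_cases i <;> simp [SM2, Matrix.mulVec, dotProduct, Fin.sum_univ_two]

theorem Tmat3_pow_three (z : k) : Tmat3 k z ^ 3 = algebraMap k _ z := by
  refine LinearMap.ext fun x => ?_
  ext i; fin_cases i <;> simp [pow_succ, Tmat3_apply]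

theorem SM3_add_one_mul_SM3 (y : k) : (SM3 k y + 1) * SM3 k y = 0 := by
  refine LinearMap.ext fun x => ?_
  ext i; fin_cases i <;> simp [SM3_apply]

theorem SM3_mul_Tmat3_mul_SM3 (z y : k) : SM3 k y * Tmat3 k z * SM3 k y = 0 := by
  refine LinearMap.ext fun x => ?_
  ext i; fin_cases i <;> simp [SM3_apply, Tmat3_apply]

/-- The action of `T` on `M_3(z,y)` as an invertible operator, the inverse coming from `T³ = z`. -/
noncomputable def unitTmat3 (z : kˣ) : (Module.End k (Fin 3 → k))ˣ :=
  Units.ofPow (Units.map (algebraMap k (Module.End k (Fin 3 → k))).toMonoidHom z) (Tmat3 k z)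
    three_ne_zero (Tmat3_pow_three (z : k))

theorem val_unitTmat3 (z : kˣ) : (unitTmat3 z : Module.End k (Fin 3 → k)) = Tmat3 k z := rfl

/-- The `H_k`-module `M_3(z,y)`, as a representation on `k³` with basis `v, Tv, T²v`. -/
noncomputable def repM3 (z y : kˣ) : Hk k →ₐ[k] Module.End k (Fin 3 → k) :=
  HeckeAlg.lift (unitTmat3 z) (SM3 k y)
    (by rw [map_zero, sub_zero, SM3_add_one_mul_SM3])
    (by
      rw [val_unitTmat3, Tmat3_pow_three]
      exact Algebra.commute_algebraMap_left (z : k) _)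
    (braid_of_mul_mul_eq_zero (SM3_mul_Tmat3_mul_SM3 (z : k) (y : k)))

theorem repM3_T (z y : kˣ) : repM3 z y (HeckeAlg.T k 0) = Tmat3 k z :=
  HeckeAlg.lift_T ..

theorem repM3_S1 (z y : kˣ) : repM3 z y (HeckeAlg.S1 k 0) = SM3 k y :=
  HeckeAlg.lift_S1 ..

theorem eq_top_of_mem_invtSubmodule_Tmat3 (hz : z ≠ 0) {D : Submodule k (Fin 3 → k)}
    (hT : D ∈ (Tmat3 k z).invtSubmodule) (hD : ![0, 0, 1] ∈ D) : D = ⊤ := by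
  have hv : ![1, 0, 0] ∈ D := by
    simpa [Tmat3_apply, hz] using D.smul_mem z⁻¹ (hT hD)
  have hTv : ![0, 1, 0] ∈ D := by
    simpa [Tmat3_apply] using hT hv
  refine eq_top_iff.2 fun x _ => ?_
  have hx : x = x 0 • ![1, 0, 0] + x 1 • ![0, 1, 0] + x 2 • ![0, 0, 1] := by
    ext i; fin_cases i <;> simp
  rw [hx]
  exact D.add_mem (D.add_mem (D.smul_mem _ hv) (D.smul_mem _ hTv)) (D.smul_mem _ hD)

theorem le_ker_SM3_of_ne_top (hz : z ≠ 0) {D : Submodule k (Fin 3 → k)}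
    (hT : D ∈ (Tmat3 k z).invtSubmodule) (hS : D ∈ (SM3 k y).invtSubmodule) (hD : D ≠ ⊤) :
    D ≤ LinearMap.ker (SM3 k y) := by
  intro x hx
  by_contra hne
  have hcoeff : y⁻¹ * x 1 - x 2 ≠ 0 := fun h0 => hne (by simp [SM3_apply, h0])
  refine hD (eq_top_of_mem_invtSubmodule_Tmat3 hz hT ?_)
  simpa [SM3_apply, hcoeff] using D.smul_mem (y⁻¹ * x 1 - x 2)⁻¹ (hS hx)

/-- The quotient map `M_3(y³,y) → M_2(y)`, in the bases `v, Tv, T²v` and `w, Tw`. It is normalised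
by `v ↦ Tw`, which avoids denominators and forces `T²v ↦ y³w`. -/
noncomputable def projM2 (y : k) : (Fin 3 → k) →ₗ[k] (Fin 2 → k) :=
  Matrix.mulVecLin !![0, -y ^ 2, y ^ 3; 1, -y, 0]

theorem projM2_apply (y : k) (x : Fin 3 → k) :
    projM2 y x = ![y ^ 3 * x 2 - y ^ 2 * x 1, x 0 - y * x 1] := by
  ext i; fin_cases i <;> simp [projM2, Matrix.mulVec, dotProduct, Fin.sum_univ_three] <;> ring

theorem projM2_Tmat3 (h : y ^ 3 = z) (x : Fin 3 → k) :
    projM2 y (Tmat3 k z x) = Tmat2 k y (projM2 y x) := by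
  subst h
  ext i; fin_cases i <;> simp [projM2_apply, Tmat3_apply, Tmat2_apply] <;> ring

theorem projM2_SM3 (hy : y ≠ 0) (x : Fin 3 → k) :
    projM2 y (SM3 k y x) = SM2 k (projM2 y x) := by
  have hfst : y ^ 3 * (y⁻¹ * x 1 - x 2) = y ^ 2 * x 1 - y ^ 3 * x 2 := by field_simp
  ext i; fin_cases i <;> simp [projM2_apply, SM3_apply, SM2_apply, hfst]

theorem projM2_surjective (hy : y ≠ 0) : Function.Surjective (projM2 y) := by
  intro w
  refine ⟨![w 1, 0, (y ^ 3)⁻¹ * w 0], ?_⟩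
  ext i; fin_cases i <;> simp [projM2_apply, hy]

theorem mem_ker_projM2_iff (hy : y ≠ 0) (z : k) {x : Fin 3 → k} :
    x ∈ LinearMap.ker (projM2 y) ↔ SM3 k y x = 0 ∧ SM3 k y (Tmat3 k z x) = 0 := by
  have hfst : y ^ 3 * x 2 - y ^ 2 * x 1 = -y ^ 3 * (y⁻¹ * x 1 - x 2) := by field_simp; ring
  have hsnd : x 0 - y * x 1 = y * (y⁻¹ * x 0 - x 1) := by field_simp
  simp [projM2_apply, SM3_apply, Tmat3_apply, hfst, hsnd, hy]

/-- The vector `u = y²v + yTv + T²v`, which spans the proper nonzero submodule of `M_3(y³,y)`. -/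
def eigenvectorM3 (y : k) : Fin 3 → k := ![y ^ 2, y, 1]

theorem eigenvectorM3_ne_zero (y : k) : eigenvectorM3 y ≠ 0 := fun h =>
  one_ne_zero (congrFun h 2)

theorem Tmat3_eigenvectorM3 (h : y ^ 3 = z) :
    Tmat3 k z (eigenvectorM3 y) = y • eigenvectorM3 y := by
  subst h
  ext i; fin_cases i <;> simp [eigenvectorM3, Tmat3_apply] <;> ring

theorem ker_projM2 (hy : y ≠ 0) : LinearMap.ker (projM2 y) = k ∙ eigenvectorM3 y := by
  ext x
  rw [LinearMap.mem_ker, Submodule.mem_span_singleton]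
  constructor
  · intro hx
    have hTv : x 1 = y * x 2 := by
      have hfst : y ^ 3 * x 2 - y ^ 2 * x 1 = 0 := by
        simpa [projM2_apply] using congrFun hx 0
      refine mul_left_cancel₀ (pow_ne_zero 2 hy) ?_
      linear_combination -hfst
    have hv : x 0 = y * x 1 := by
      simpa [projM2_apply, sub_eq_zero] using congrFun hx 1
    refine ⟨x 2, ?_⟩
    ext i; fin_cases i <;> simp [eigenvectorM3, hv, hTv] <;> ring
  · rintro ⟨c, rfl⟩
    ext i; fin_cases i <;> simp [projM2_apply, eigenvectorM3] <;> ring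

theorem isAtom_ker_projM2 (hy : y ≠ 0) : IsAtom (LinearMap.ker (projM2 y)) := by
  rw [ker_projM2 hy]
  exact nonzero_span_atom _ (eigenvectorM3_ne_zero y)

theorem finrank_ker_projM2 (hy : y ≠ 0) : Module.finrank k (LinearMap.ker (projM2 y)) = 1 := by
  rw [ker_projM2 hy, finrank_span_singleton (eigenvectorM3_ne_zero y)]

theorem Tmat3_apply_of_mem_ker_projM2 (hy : y ≠ 0) (h : y ^ 3 = z) {x : Fin 3 → k}
    (hx : x ∈ LinearMap.ker (projM2 y)) : Tmat3 k z x = y • x := by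
  rw [ker_projM2 hy, Submodule.mem_span_singleton] at hx
  obtain ⟨c, rfl⟩ := hx
  rw [map_smul, Tmat3_eigenvectorM3 h, smul_comm]

theorem ker_projM2_ne_top (y : k) : LinearMap.ker (projM2 y) ≠ ⊤ := by
  intro htop
  have hv : projM2 y ![1, 0, 0] = 0 := LinearMap.mem_ker.1 (htop ▸ Submodule.mem_top)
  simpa [projM2_apply] using congrFun hv 1

theorem repM3_invariant_iff_eq_ker_projM2 {z y : kˣ} (h : (y : k) ^ 3 = z)
    {D : Submodule k (Fin 3 → k)} :
    ((∀ a : Hk k, ∀ x ∈ D, repM3 z y a x ∈ D) ∧ D ≠ ⊥ ∧ D ≠ ⊤) ↔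
      D = LinearMap.ker (projM2 (y : k)) := by
  have hinvt : (∀ a : Hk k, ∀ x ∈ D, repM3 z y a x ∈ D) ↔
      D ∈ (Tmat3 k z).invtSubmodule ∧ D ∈ (SM3 k y).invtSubmodule := by
    rw [← repM3_T z y, ← repM3_S1 z y]
    exact HeckeAlg.forall_mem_invtSubmodule_iff (repM3 z y)
  rw [hinvt]
  constructor
  · rintro ⟨⟨hT, hS⟩, hbot, htop⟩
    have hker := le_ker_SM3_of_ne_top z.ne_zero hT hS htop
    have hle : D ≤ LinearMap.ker (projM2 (y : k)) := fun x hx =>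
      (mem_ker_projM2_iff y.ne_zero (z : k)).2 ⟨hker hx, hker (hT hx)⟩
    exact ((isAtom_ker_projM2 y.ne_zero).le_iff.1 hle).resolve_left hbot
  · rintro rfl
    refine ⟨⟨fun x hx => ?_, fun x hx => ?_⟩, (isAtom_ker_projM2 y.ne_zero).1, ker_projM2_ne_top _⟩
    · rw [Submodule.mem_comap, LinearMap.mem_ker, projM2_Tmat3 h, LinearMap.mem_ker.1 hx, map_zero]
    · rw [Submodule.mem_comap, LinearMap.mem_ker, projM2_SM3 y.ne_zero, LinearMap.mem_ker.1 hx,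
        map_zero]

end M3

theorem statement13_general (k : Type) [Field k] (z y : kˣ) (h : (y : k) ^ 3 = (z : k)) :
    ∃ ρ : Hk k →ₐ[k] Module.End k (Fin 3 → k),
      ρ (HeckeAlg.T k 0) = Tmat3 k z ∧ ρ (HeckeAlg.S1 k 0) = SM3 k y ∧
      (∃! D : Submodule k (Fin 3 → k),
        (∀ a : Hk k, ∀ x ∈ D, ρ a x ∈ D) ∧ D ≠ ⊥ ∧ D ≠ ⊤) ∧
      ∀ D : Submodule k (Fin 3 → k),
        (∀ a : Hk k, ∀ x ∈ D, ρ a x ∈ D) → D ≠ ⊥ → D ≠ ⊤ →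
          Module.finrank k D = 1 ∧
          (∀ x ∈ D, Tmat3 k z x = (y : k) • x ∧ SM3 k y x = 0) ∧
          ∃ g : ((Fin 3 → k) ⧸ D) ≃ₗ[k] (Fin 2 → k),
            (∀ x : Fin 3 → k,
              g (Submodule.Quotient.mk (Tmat3 k z x)) = Tmat2 k y (g (Submodule.Quotient.mk x))) ∧
            (∀ x : Fin 3 → k,
              g (Submodule.Quotient.mk (SM3 k y x)) = SM2 k (g (Submodule.Quotient.mk x))) := by
  refine ⟨repM3 z y, repM3_T z y, repM3_S1 z y,
    ⟨LinearMap.ker (projM2 (y : k)), (repM3_invariant_iff_eq_ker_projM2 h).2 rfl,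
      fun _ hD => (repM3_invariant_iff_eq_ker_projM2 h).1 hD⟩, fun D hinvt hbot htop => ?_⟩
  obtain rfl := (repM3_invariant_iff_eq_ker_projM2 h).1 ⟨hinvt, hbot, htop⟩
  exact ⟨finrank_ker_projM2 y.ne_zero,
    fun x hx => ⟨Tmat3_apply_of_mem_ker_projM2 y.ne_zero h hx,
      ((mem_ker_projM2_iff y.ne_zero (z : k)).1 hx).1⟩,
    (projM2 (y : k)).quotKerEquivOfSurjective (projM2_surjective y.ne_zero),
    projM2_Tmat3 h, projM2_SM3 y.ne_zero⟩

/-- Let `z, y ∈ k^×` with `y³ = z`. Then the `H_k`-module `M_3(z,y)` has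
exactly one `H_k`-submodule `D` other than `0` and `M_3(z,y)`; `D` is one-dimensional and on
`D` the element `T` acts by the scalar `y` and `S_1` acts by `0` (so `D` is isomorphic to the
character `M_1(0,y)`); and the quotient `M_3(z,y)/D` is isomorphic to `M_2(y)`. -/
theorem statement13 (p : ℕ) [Fact p.Prime] (k : Type) [Field k] [IsAlgClosed k] [CharP k p]
    (z y : kˣ) (h : (y : k) ^ 3 = (z : k)) :
    ∃ ρ : Hk k →ₐ[k] Module.End k (Fin 3 → k),
      ρ (HeckeAlg.T k 0) = Tmat3 k z ∧ ρ (HeckeAlg.S1 k 0) = SM3 k y ∧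
      (∃! D : Submodule k (Fin 3 → k),
        (∀ a : Hk k, ∀ x ∈ D, ρ a x ∈ D) ∧ D ≠ ⊥ ∧ D ≠ ⊤) ∧
      ∀ D : Submodule k (Fin 3 → k),
        (∀ a : Hk k, ∀ x ∈ D, ρ a x ∈ D) → D ≠ ⊥ → D ≠ ⊤ →
          Module.finrank k D = 1 ∧
          (∀ x ∈ D, Tmat3 k z x = (y : k) • x ∧ SM3 k y x = 0) ∧
          ∃ g : ((Fin 3 → k) ⧸ D) ≃ₗ[k] (Fin 2 → k),
            (∀ x : Fin 3 → k,
              g (Submodule.Quotient.mk (Tmat3 k z x)) = Tmat2 k y (g (Submodule.Quotient.mk x))) ∧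
            (∀ x : Fin 3 → k,
              g (Submodule.Quotient.mk (SM3 k y x)) = SM2 k (g (Submodule.Quotient.mk x))) :=
  statement13_general k z y h
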